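/- arXiv:1205.4889 — 3 statements merged into one kernel-verified Lean document; each statement's English description precedes it below -/
import Mathlib

section
/- Let d ≥ 0, let (σ₁, σ₂) be a secure equilibrium in the truncated game G^d of a quantitative two-player reachability game and let ρ be its outcome. Assume ρ has a prefix αβγ, where β contains at least one vertex, such that Visit(α) = Visit(αβγ), last(α) = last(αβ), |αβ| ≤ l·|V| and |αβγ| = (l+1)·|V| for some l ≥ 1. Then if Visit(α) ≠ ∅ or Visit(ρ) ≠ {1,2}, one has Visit(α) = Visit(ρ). -/
/-- A quantitative multiplayer reachability game: a finite directed graph whose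
vertex set is partitioned among the players (via `owner`), with an initial vertex `v0`,
an edge relation `E` such that every vertex has an outgoing edge, and a goal set
`goal i` for each player `i`. -/
structure ReachGame (P : Type) (V : Type) where
  owner : V → P
  v0 : V
  E : V → V → Prop
  total : ∀ v : V, ∃ w : V, E v w
  goal : P → Set V

namespace ReachGame

variable {P V : Type} [DecidableEq P] (G : ReachGame P V)

/-- The last vertex of a history (with default `v0`). -/
def lastV (h : List V) : V := h.getLastD G.v0

/-- A history: a nonempty finite path in the graph starting at `v0`. -/
def IsHistory (h : List V) : Prop :=
  h ≠ [] ∧ h.head? = some G.v0 ∧ List.Chain' G.E h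

/-- A play: an infinite path starting at `v0`. -/
def IsPlay (ρ : ℕ → V) : Prop :=
  ρ 0 = G.v0 ∧ ∀ k : ℕ, G.E (ρ k) (ρ (k + 1))

/-- `σ` is a (total encoding of a) strategy of player `i`: on every history ending in
a vertex owned by `i` it chooses a successor along an edge. -/
def IsStrategy (i : P) (σ : List V → V) : Prop :=
  ∀ h : List V, G.IsHistory h → G.owner (G.lastV h) = i → G.E (G.lastV h) (σ h)

/-- A strategy profile: one strategy per player. -/
def IsProfile (prof : P → List V → V) : Prop :=
  ∀ i : P, G.IsStrategy i (prof i)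

/-- The history of length `n` (i.e. with `n` edges) obtained by letting the players
follow the profile `prof` from `v0`. -/
def outHist (prof : P → List V → V) : ℕ → List V
  | 0 => [G.v0]
  | n + 1 => outHist prof n ++ [prof (G.owner (G.lastV (outHist prof n))) (outHist prof n)]

/-- The outcome play of the strategy profile `prof`. -/
def outcome (prof : P → List V → V) (n : ℕ) : V :=
  G.lastV (G.outHist prof n)

/-- The cost of player `i` for the play `ρ`: the least `l` with `ρ l ∈ goal i`,
and `⊤` (`+∞`) if there is no such `l`. -/
noncomputable def cost (i : P) (ρ : ℕ → V) : ℕ∞ :=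
  sInf {n : ℕ∞ | ∃ l : ℕ, n = (l : ℕ∞) ∧ ρ l ∈ G.goal i}

/-- Nash equilibrium: no player can strictly decrease his cost by a unilateral
deviation. -/
def IsNash (prof : P → List V → V) : Prop :=
  ∀ (j : P) (σ' : List V → V), G.IsStrategy j σ' →
    G.cost j (G.outcome prof) ≤ G.cost j (G.outcome (Function.update prof j σ'))

/-- `h ≈_σ h'` : the strategy `σ` of player `i` behaves the same after `h` and `h'`,
i.e. `σ (h ++ δ) = σ (h' ++ δ)` for every suffix `δ` making both `h ++ δ` and
`h' ++ δ` histories ending in a vertex of player `i`. -/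
def MemEq (i : P) (σ : List V → V) (h h' : List V) : Prop :=
  ∀ δ : List V,
    G.IsHistory (h ++ δ) → G.owner (G.lastV (h ++ δ)) = i →
    G.IsHistory (h' ++ δ) → G.owner (G.lastV (h' ++ δ)) = i →
    σ (h ++ δ) = σ (h' ++ δ)

/-- A strategy of player `i` is finite-memory if the relation `≈_σ` has finitely many
equivalence classes on histories, i.e. there is a finite set of histories meeting
every class. -/
def FiniteMemory (i : P) (σ : List V → V) : Prop :=
  ∃ S : Finset (List V), ∀ h : List V, G.IsHistory h →
    ∃ h' ∈ S, G.IsHistory h' ∧ G.MemEq i σ h h'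

/-- A profile is finite-memory if each of its strategies is. -/
def FiniteMemoryProfile (prof : P → List V → V) : Prop :=
  ∀ i : P, G.FiniteMemory i (prof i)

/-- `Visit h`: the set of players whose goal set is visited by the finite path `h`. -/
def visitL (h : List V) : Set P := {i : P | ∃ v ∈ h, v ∈ G.goal i}

/-- The type of a strategy profile: the set of players whose goal set is visited by
the outcome. -/
def typeOf (prof : P → List V → V) : Set P :=
  {i : P | ∃ l : ℕ, G.outcome prof l ∈ G.goal i}

/-! ### The truncated game `G^d` -/

/-- A strategy of player `i` in the truncated game `G^d` : it chooses a successor on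
every history with less than `d` edges (list length `≤ d`) ending in a vertex of `i`. -/
def IsStrategyTrunc (d : ℕ) (i : P) (σ : List V → V) : Prop :=
  ∀ h : List V, G.IsHistory h → h.length ≤ d → G.owner (G.lastV h) = i →
    G.E (G.lastV h) (σ h)

/-- A strategy profile of the truncated game `G^d`. -/
def IsProfileTrunc (d : ℕ) (prof : P → List V → V) : Prop :=
  ∀ i : P, G.IsStrategyTrunc d i (prof i)

/-- The cost of player `i` for a finite play `h` (a list of vertices): the least
position of `h` lying in `goal i`, and `⊤` if `goal i` is not visited. -/
noncomputable def costList (i : P) (h : List V) : ℕ∞ :=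
  sInf {n : ℕ∞ | ∃ l : ℕ, n = (l : ℕ∞) ∧ l < h.length ∧ h.getD l G.v0 ∈ G.goal i}

/-- Nash equilibrium of the truncated game `G^d` (whose plays are the histories with
exactly `d` edges). -/
def IsNashTrunc (d : ℕ) (prof : P → List V → V) : Prop :=
  ∀ (j : P) (σ' : List V → V), G.IsStrategyTrunc d j σ' →
    G.costList j (G.outHist prof d) ≤
      G.costList j (G.outHist (Function.update prof j σ') d)

/-- The type of a strategy profile of the truncated game `G^d`. -/
def typeOfTrunc (d : ℕ) (prof : P → List V → V) : Set P :=
  G.visitL (G.outHist prof d)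

end ReachGame

/-- `(x₁,x₂) ≺₁ (y₁,y₂)` iff `x₁ > y₁`, or `x₁ = y₁` and `x₂ < y₂` :
player 1 prefers the cost profile `y` to `x`. -/
def prec1 (x y : ℕ∞ × ℕ∞) : Prop := y.1 < x.1 ∨ (x.1 = y.1 ∧ x.2 < y.2)

/-- `(x₁,x₂) ≺₂ (y₁,y₂)` iff `x₂ > y₂`, or `x₂ = y₂` and `x₁ < y₁` :
player 2 prefers the cost profile `y` to `x`. -/
def prec2 (x y : ℕ∞ × ℕ∞) : Prop := y.2 < x.2 ∨ (x.2 = y.2 ∧ x.1 < y.1)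

namespace ReachGame

variable {V : Type} (G : ReachGame (Fin 2) V)

/-- The pair of costs of the two players for the play `ρ`. -/
noncomputable def costPair (ρ : ℕ → V) : ℕ∞ × ℕ∞ := (G.cost 0 ρ, G.cost 1 ρ)

/-- Secure equilibrium: no player `j` has a `≺ⱼ`-profitable deviation. -/
def IsSecure (prof : Fin 2 → List V → V) : Prop :=
  (∀ σ' : List V → V, G.IsStrategy 0 σ' →
    ¬ prec1 (G.costPair (G.outcome prof))
        (G.costPair (G.outcome (Function.update prof 0 σ')))) ∧
  (∀ σ' : List V → V, G.IsStrategy 1 σ' →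
    ¬ prec2 (G.costPair (G.outcome prof))
        (G.costPair (G.outcome (Function.update prof 1 σ'))))

/-- The pair of costs of the two players for a finite play `h`. -/
noncomputable def costListPair (h : List V) : ℕ∞ × ℕ∞ := (G.costList 0 h, G.costList 1 h)

/-- Secure equilibrium of the truncated game `G^d`. -/
def IsSecureTrunc (d : ℕ) (prof : Fin 2 → List V → V) : Prop :=
  (∀ σ' : List V → V, G.IsStrategyTrunc d 0 σ' →
    ¬ prec1 (G.costListPair (G.outHist prof d))
        (G.costListPair (G.outHist (Function.update prof 0 σ') d))) ∧
  (∀ σ' : List V → V, G.IsStrategyTrunc d 1 σ' →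
    ¬ prec2 (G.costListPair (G.outHist prof d))
        (G.costListPair (G.outHist (Function.update prof 1 σ') d)))

end ReachGame

namespace ReachGame

section Aux

variable {V : Type} (G : ReachGame (Fin 2) V)

/-- Step-bounded attractor of the goal set of player `i`. -/
def attr (i : Fin 2) : ℕ → Set V
  | 0 => G.goal i
  | n + 1 => {v | v ∈ G.goal i ∨ (G.owner v = i ∧ ∃ w, G.E v w ∧ w ∈ attr i n) ∨
      (G.owner v ≠ i ∧ ∀ w, G.E v w → w ∈ attr i n)}

theorem attr_succ_mono (i : Fin 2) (n : ℕ) : G.attr i n ⊆ G.attr i (n + 1) := by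
  induction n with
  | zero => intro v hv; exact Or.inl hv
  | succ n ih =>
    intro v hv
    rcases hv with h | ⟨ho, w, hE, hw⟩ | ⟨ho, hw⟩
    · exact Or.inl h
    · exact Or.inr (Or.inl ⟨ho, w, hE, ih hw⟩)
    · exact Or.inr (Or.inr ⟨ho, fun w hE => ih (hw w hE)⟩)

theorem attr_step_congr (i : Fin 2) (m n : ℕ) (h : G.attr i m = G.attr i n) :
    G.attr i (m + 1) = G.attr i (n + 1) := by
  simp only [attr, h]

theorem attr_stab [Fintype V] (i : Fin 2) :
    G.attr i (Fintype.card V + 1) = G.attr i (Fintype.card V) := by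
  have hmono : Monotone (G.attr i) := monotone_nat_of_le_succ (G.attr_succ_mono i)
  have heq : ∀ m n, m ≤ n → (G.attr i m).ncard = (G.attr i n).ncard →
      G.attr i m = G.attr i n := fun m n hmn h =>
    Set.eq_of_subset_of_ncard_le (hmono hmn) h.ge (Set.toFinite _)
  have key := Nat.stabilises_of_monotone (f := fun n => (G.attr i n).ncard)
    (b := Fintype.card V) (n := Fintype.card V + 1)
    (fun m n hmn => Set.ncard_le_ncard (hmono hmn) (Set.toFinite _))
    (fun m => by
      have := Set.ncard_le_ncard (Set.subset_univ (G.attr i m)) (Set.toFinite _)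
      rwa [Set.ncard_univ, Nat.card_eq_fintype_card] at this)
    (fun m h => by
      have := heq m (m + 1) (Nat.le_succ m) h
      exact congrArg Set.ncard (G.attr_step_congr i _ _ this))
    (Nat.le_succ _)
  exact (heq _ _ (Nat.le_succ _) key.symm).symm

theorem outHist_length (p : Fin 2 → List V → V) (n : ℕ) : (G.outHist p n).length = n + 1 := by
  induction n with
  | zero => rfl
  | succ n ih => simp [outHist, ih]

theorem lastV_append_singleton (h : List V) (v : V) : G.lastV (h ++ [v]) = v := by
  simp [lastV]

theorem outHist_prefix (p : Fin 2 → List V → V) {m n : ℕ} (h : m ≤ n) :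
    G.outHist p m <+: G.outHist p n := by
  induction n, h using Nat.le_induction with
  | base => exact List.prefix_refl _
  | succ n _ ih => exact ih.trans (List.prefix_append _ _)

theorem outHist_edge (d : ℕ) (p : Fin 2 → List V → V) (hp : G.IsProfileTrunc d p) (n : ℕ)
    (hn : n < d) (hh : G.IsHistory (G.outHist p n)) :
    G.E (G.lastV (G.outHist p n)) (p (G.owner (G.lastV (G.outHist p n))) (G.outHist p n)) :=
  hp _ _ hh (by rw [outHist_length]; omega) rfl

theorem isHistory_snoc (h : List V) (v : V) (hh : G.IsHistory h) (hE : G.E (G.lastV h) v) :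
    G.IsHistory (h ++ [v]) := by
  obtain ⟨h1, h2, h3⟩ := hh
  refine ⟨by simp, by simp [h2], ?_⟩
  refine List.IsChain.append h3 (List.isChain_singleton v) ?_
  intro x hx y hy
  have hy' : v = y := by simpa using hy
  have hx' : G.lastV h = x := by
    simp only [lastV, List.getLastD_eq_getLast?]
    rw [Option.mem_def.1 hx]; rfl
  rw [← hy', ← hx']; exact hE

theorem outHist_isHistory (d : ℕ) (p : Fin 2 → List V → V) (hp : G.IsProfileTrunc d p) (n : ℕ)
    (hn : n ≤ d) : G.IsHistory (G.outHist p n) := by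
  induction n with
  | zero => exact ⟨by simp [outHist], by simp [outHist], List.isChain_singleton _⟩
  | succ n ih =>
    have hh := ih (by omega)
    exact G.isHistory_snoc _ _ hh (G.outHist_edge d p hp n (by omega) hh)

theorem outHist_congr (p q : Fin 2 → List V → V) (a : ℕ)
    (h : ∀ i (x : List V), x.length < a → p i x = q i x) (n : ℕ) (hn : n < a) :
    G.outHist p n = G.outHist q n := by
  induction n with
  | zero => rfl
  | succ n ih =>
    have := ih (by omega)
    simp only [outHist]
    rw [← this, h _ _ (by rw [outHist_length]; omega)]

theorem mem_visitL_iff (i : Fin 2) (h : List V) :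
    i ∈ G.visitL h ↔ ∃ n, n < h.length ∧ h.getD n G.v0 ∈ G.goal i := by
  constructor
  · rintro ⟨v, hv, hg⟩
    obtain ⟨n, hn, rfl⟩ := List.mem_iff_getElem.1 hv
    exact ⟨n, hn, by rwa [List.getD_eq_getElem _ _ hn]⟩
  · rintro ⟨n, hn, hg⟩
    rw [List.getD_eq_getElem _ _ hn] at hg
    exact ⟨_, List.getElem_mem hn, hg⟩

theorem getD_prefix {h' h : List V} (hp : h' <+: h) (n : ℕ) (hn : n < h'.length) (v : V) :
    h.getD n v = h'.getD n v := by
  obtain ⟨t, rfl⟩ := hp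
  exact List.getD_append _ _ _ _ hn

theorem costList_lt (i : Fin 2) {h' h : List V} (hp : h' <+: h) (hi : i ∈ G.visitL h') :
    G.costList i h < h'.length := by
  obtain ⟨n, hn, hg⟩ := (G.mem_visitL_iff i h').1 hi
  refine lt_of_le_of_lt (sInf_le ⟨n, rfl, hn.trans_le hp.length_le, ?_⟩) (Nat.cast_lt.2 hn)
  rwa [getD_prefix hp n hn]

theorem le_costList (i : Fin 2) {h' h : List V} (hp : h' <+: h) (hi : i ∉ G.visitL h') :
    (h'.length : ℕ∞) ≤ G.costList i h := by
  refine le_sInf ?_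
  rintro _ ⟨n, rfl, hn, hg⟩
  refine Nat.cast_le.2 ?_
  by_contra hlt
  push Not at hlt
  rw [getD_prefix hp n hlt] at hg
  exact hi ((G.mem_visitL_iff i h').2 ⟨n, hlt, hg⟩)

theorem costList_eq_top (i : Fin 2) {h : List V} (hi : i ∉ G.visitL h) :
    G.costList i h = ⊤ := by
  refine top_unique (le_sInf ?_)
  rintro _ ⟨n, rfl, hn, hg⟩
  exact absurd ((G.mem_visitL_iff i h).2 ⟨n, hn, hg⟩) hi

theorem costList_le_of_prefix (i : Fin 2) {h' h₁ h₂ : List V} (hp₁ : h' <+: h₁)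
    (hp₂ : h' <+: h₂) (hi : i ∈ G.visitL h') : G.costList i h₁ ≤ G.costList i h₂ := by
  refine le_sInf ?_
  rintro _ ⟨n, rfl, hn, hg⟩
  by_cases hlt : n < h'.length
  · refine sInf_le ⟨n, rfl, hlt.trans_le hp₁.length_le, ?_⟩
    rw [getD_prefix hp₁ n hlt]
    rwa [getD_prefix hp₂ n hlt] at hg
  · exact (G.costList_lt i hp₁ hi).le.trans (Nat.cast_le.2 (by omega))

theorem secure_apply (d : ℕ) (prof : Fin 2 → List V → V) (hsec : G.IsSecureTrunc d prof)
    (j i : Fin 2) (hij : i ≠ j) (σ' : List V → V) (hσ : G.IsStrategyTrunc d j σ') :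
    ¬ (G.costList j (G.outHist (Function.update prof j σ') d) < G.costList j (G.outHist prof d) ∨
      (G.costList j (G.outHist prof d) = G.costList j (G.outHist (Function.update prof j σ') d) ∧
       G.costList i (G.outHist prof d) < G.costList i (G.outHist (Function.update prof j σ') d)))
    := by
  obtain ⟨h0, h1⟩ := hsec
  rcases (by omega : (j = 0 ∧ i = 1) ∨ (j = 1 ∧ i = 0)) with ⟨rfl, rfl⟩ | ⟨rfl, rfl⟩
  · exact h0 σ' hσ
  · exact h1 σ' hσ

open Classical in
/-- Deviation: follow `σ` on lists of length `< a`, and afterwards move into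
the (length-dependent) target set whenever possible. -/
noncomputable def devi (a : ℕ) (σ : List V → V) (T : ℕ → Set V) (h : List V) : V :=
  if h.length < a then σ h
  else if hw : ∃ w, G.E (G.lastV h) w ∧ w ∈ T h.length then hw.choose
  else (G.total (G.lastV h)).choose

theorem devi_strategy (d a : ℕ) (j : Fin 2) (σ : List V → V) (T : ℕ → Set V)
    (hσ : G.IsStrategyTrunc d j σ) : G.IsStrategyTrunc d j (G.devi a σ T) := by
  intro h hh hl ho
  unfold devi
  split_ifs with h1 h2
  · exact hσ h hh hl ho
  · exact h2.choose_spec.1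
  · exact (G.total (G.lastV h)).choose_spec

theorem devi_mem (a : ℕ) (σ : List V → V) (T : ℕ → Set V) (h : List V) (hl : a ≤ h.length)
    (hw : ∃ w, G.E (G.lastV h) w ∧ w ∈ T h.length) : G.devi a σ T h ∈ T h.length := by
  unfold devi
  rw [if_neg (by omega), dif_pos hw]
  exact hw.choose_spec.2

theorem update_profile (d : ℕ) (prof : Fin 2 → List V → V) (hprof : G.IsProfileTrunc d prof)
    (j : Fin 2) (σ' : List V → V) (hσ : G.IsStrategyTrunc d j σ') :
    G.IsProfileTrunc d (Function.update prof j σ') := by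
  intro k
  by_cases hk : k = j
  · subst hk; simpa using hσ
  · rw [Function.update_of_ne hk]; exact hprof k

theorem lastV_outHist_mem (p : Fin 2 → List V → V) (n : ℕ) :
    G.lastV (G.outHist p n) ∈ G.outHist p n := by
  cases n with
  | zero => simp [outHist, lastV]
  | succ n => simp [outHist, lastV]

/-- The key contradiction. -/
theorem key [Fintype V] (d : ℕ) (prof : Fin 2 → List V → V)
    (hprof : G.IsProfileTrunc d prof) (hsec : G.IsSecureTrunc d prof)
    (i j : Fin 2) (hij : i ≠ j) (b c : ℕ) (hbc : b + Fintype.card V ≤ c) (hcd : c ≤ d)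
    (hi : i ∉ G.visitL (G.outHist prof c)) (hi' : i ∈ G.visitL (G.outHist prof d))
    (hj : j ∈ G.visitL (G.outHist prof b) ∨ j ∉ G.visitL (G.outHist prof d)) : False := by
  set N := Fintype.card V with hN
  have agree : ∀ (k : Fin 2) (T : ℕ → Set V),
      G.outHist (Function.update prof k (G.devi (b + 1) (prof k) T)) b = G.outHist prof b := by
    intro k T
    refine G.outHist_congr _ _ (b + 1) ?_ b (by omega)
    intro m x hx
    by_cases hm : m = k
    · subst hm; simp [devi, hx]
    · rw [Function.update_of_ne hm]
  by_cases hv : G.lastV (G.outHist prof b) ∈ G.attr i N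
  · -- player `i` can reach his goal quickly
    set T : ℕ → Set V := fun n => G.attr i (N - (n - b)) with hT
    have hσ := G.devi_strategy d (b + 1) i (prof i) T (hprof i)
    have hag := agree i T
    set q := Function.update prof i (G.devi (b + 1) (prof i) T) with hq
    have hqp : G.IsProfileTrunc d q := G.update_profile d prof hprof i _ hσ
    have inv : ∀ k, k ≤ N → i ∈ G.visitL (G.outHist q (b + k)) ∨
        G.lastV (G.outHist q (b + k)) ∈ G.attr i (N - k) := by
      intro k
      induction k with
      | zero => intro _; right; simpa [hag] using hv
      | succ k ih =>
        intro hk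
        rcases ih (by omega) with h | h
        · left
          obtain ⟨v, hv, hg⟩ := h
          exact ⟨v, (G.outHist_prefix q (by omega)).subset hv, hg⟩
        · have hNk : N - k = (N - (k + 1)) + 1 := by omega
          rw [hNk] at h
          have hE := G.outHist_edge d q hqp (b + k) (by omega)
            (G.outHist_isHistory d q hqp _ (by omega))
          rcases h with h | ⟨ho, hw⟩ | ⟨ho, hw⟩
          · left
            exact ⟨_, (G.outHist_prefix q (by omega)).subset (G.lastV_outHist_mem q _), h⟩
          · right
            rw [← Nat.add_assoc, outHist, lastV_append_singleton, ho, hq, Function.update_self,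
              ← hq]
            have hTl : T (G.outHist q (b + k)).length = G.attr i (N - (k + 1)) := by
              simp only [hT, outHist_length]
              congr 2; omega
            rw [← hTl]
            refine G.devi_mem _ _ T _ (by rw [outHist_length]; omega) ?_
            rw [hTl]; exact hw
          · right
            rw [← Nat.add_assoc, outHist, lastV_append_singleton]
            exact hw _ hE
    have hvis : i ∈ G.visitL (G.outHist q (b + N)) := by
      rcases inv N le_rfl with h | h
      · exact h
      · rw [Nat.sub_self] at h
        exact ⟨_, G.lastV_outHist_mem q _, h⟩
    refine G.secure_apply d prof hsec i j hij.symm _ hσ (Or.inl ?_)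
    have h1 := G.costList_lt i (G.outHist_prefix q (show b + N ≤ d by omega)) hvis
    have h2 := G.le_costList i (G.outHist_prefix prof hcd) hi
    refine h1.trans_le (le_trans ?_ h2)
    rw [outHist_length, outHist_length]
    exact Nat.cast_le.2 (by omega)
  · -- player `j` can keep player `i` away from his goal
    set T : ℕ → Set V := fun _ => (G.attr i N)ᶜ with hT
    have hσ := G.devi_strategy d (b + 1) j (prof j) T (hprof j)
    have hag := agree j T
    set q := Function.update prof j (G.devi (b + 1) (prof j) T) with hq
    have hqp : G.IsProfileTrunc d q := G.update_profile d prof hprof j _ hσ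
    have hgoal : G.goal i ⊆ G.attr i N :=
      (monotone_nat_of_le_succ (G.attr_succ_mono i)) (Nat.zero_le N)
    have inv : ∀ n, b ≤ n → n ≤ d → i ∉ G.visitL (G.outHist q n) ∧
        G.lastV (G.outHist q n) ∉ G.attr i N := by
      intro n hn
      induction n, hn using Nat.le_induction with
      | base =>
        intro _
        rw [hag]
        refine ⟨?_, hv⟩
        rintro ⟨v, hv, hg⟩
        exact hi ⟨v, (G.outHist_prefix prof (by omega)).subset hv, hg⟩
      | succ n hn ih =>
        intro hnd
        obtain ⟨ih1, ih2⟩ := ih (by omega)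
        have hE := G.outHist_edge d q hqp n (by omega)
          (G.outHist_isHistory d q hqp _ (by omega))
        have hnew : q (G.owner (G.lastV (G.outHist q n))) (G.outHist q n) ∉ G.attr i N := by
          rw [← G.attr_stab i] at ih2
          by_cases ho : G.owner (G.lastV (G.outHist q n)) = i
          · intro hmem
            exact ih2 (Or.inr (Or.inl ⟨ho, _, hE, hmem⟩))
          · have ho' : G.owner (G.lastV (G.outHist q n)) = j := by omega
            have hw : ∃ w, G.E (G.lastV (G.outHist q n)) w ∧ w ∉ G.attr i N := by
              by_contra hcon
              push Not at hcon
              exact ih2 (Or.inr (Or.inr ⟨ho, hcon⟩))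
            rw [ho', hq, Function.update_self, ← hq]
            exact G.devi_mem _ _ T _ (by rw [outHist_length]; omega) hw
        constructor
        · rintro ⟨v, hv, hg⟩
          rw [outHist, List.mem_append, List.mem_singleton] at hv
          rcases hv with hv | rfl
          · exact ih1 ⟨v, hv, hg⟩
          · exact hnew (hgoal hg)
        · rw [outHist, lastV_append_singleton]
          exact hnew
    have hbd : b ≤ d := by omega
    have htop := G.costList_eq_top i (inv d hbd le_rfl).1
    have hlt : G.costList i (G.outHist prof d) < ⊤ :=
      (G.costList_lt i (List.prefix_refl _) hi').trans_le le_top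
    have hle : G.costList j (G.outHist q d) ≤ G.costList j (G.outHist prof d) := by
      rcases hj with hj | hj
      · refine G.costList_le_of_prefix j (h' := G.outHist prof b) ?_
          (G.outHist_prefix prof hbd) hj
        rw [← hag]; exact G.outHist_prefix q hbd
      · rw [G.costList_eq_top j hj]; exact le_top
    refine G.secure_apply d prof hsec j i hij _ hσ ?_
    rcases hle.lt_or_eq with h | h
    · exact Or.inl h
    · exact Or.inr ⟨h.symm, by rw [← hq, htop]; exact hlt⟩

theorem eq_outHist_of_prefix (p : Fin 2 → List V → V) (d : ℕ) (h : List V) (hne : h ≠ [])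
    (hp : h <+: G.outHist p d) :
    h.length - 1 ≤ d ∧ h = G.outHist p (h.length - 1) := by
  have hl := hp.length_le
  have hpos := List.length_pos_iff.2 hne
  rw [outHist_length] at hl
  refine ⟨by omega, ?_⟩
  have h2 := G.outHist_prefix p (show h.length - 1 ≤ d by omega)
  refine (List.prefix_of_prefix_length_le hp h2 ?_).eq_of_length ?_ <;>
    rw [outHist_length] <;> omega

end Aux

end ReachGame

/-- Let `(σ₁,σ₂)` be a secure equilibrium of the truncated game
`G^d` of a two-player game, whose outcome `ρ` has a prefix `αβγ` (with `β` nonempty)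
such that `Visit(α) = Visit(αβγ)`, `last(α) = last(αβ)`, `|αβ| ≤ l·|V|` and
`|αβγ| = (l+1)·|V|` for some `l ≥ 1` (lengths in edges).  Then if `Visit(α) ≠ ∅` or
`Visit(ρ) ≠ {1,2}`, one has `Visit(α) = Visit(ρ)`. -/
theorem secure_visit_prefix {V : Type} [Fintype V]
    (G : ReachGame (Fin 2) V) (d : ℕ)
    (prof : Fin 2 → List V → V)
    (hprof : G.IsProfileTrunc d prof) (hsec : G.IsSecureTrunc d prof)
    (α β γ rest : List V) (hα : α ≠ []) (hβ : β ≠ [])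
    (hdecomp : G.outHist prof d = α ++ β ++ γ ++ rest)
    (hvisit : G.visitL α = G.visitL (α ++ β ++ γ))
    (hlast : G.lastV α = G.lastV (α ++ β))
    (l : ℕ) (hl : 1 ≤ l)
    (hlen1 : (α ++ β).length - 1 ≤ l * Fintype.card V)
    (hlen2 : (α ++ β ++ γ).length - 1 = (l + 1) * Fintype.card V)
    (hcase : G.visitL α ≠ ∅ ∨ G.visitL (G.outHist prof d) ≠ Set.univ) :
    G.visitL α = G.visitL (G.outHist prof d) := by
  have _ := hlast
  have hpα : α <+: G.outHist prof d := by
    rw [hdecomp, List.append_assoc, List.append_assoc]; exact List.prefix_append _ _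
  have hpγ : (α ++ β ++ γ) <+: G.outHist prof d := by
    rw [hdecomp]; exact List.prefix_append _ _
  obtain ⟨hb, hαeq⟩ := G.eq_outHist_of_prefix prof d α hα hpα
  obtain ⟨hc, hγeq⟩ := G.eq_outHist_of_prefix prof d _ (by simp [hα]) hpγ
  refine Set.Subset.antisymm ?_ ?_
  · rintro i ⟨v, hv, hg⟩
    exact ⟨v, hpα.subset hv, hg⟩
  · intro i hi
    by_contra hiα
    obtain ⟨j, hij⟩ : ∃ j : Fin 2, i ≠ j := 
      (exists_ne i).imp fun _ h => h.symm
    refine G.key d prof hprof hsec i j hij (α.length - 1) ((α ++ β ++ γ).length - 1) ?_ hc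
      ?_ hi ?_
    · rw [hlen2, Nat.add_mul, Nat.one_mul]
      rw [List.length_append] at hlen1
      omega
    · rw [← hγeq, ← hvisit]; exact hiα
    · rw [← hαeq]
      have hall : ∀ k : Fin 2, k = i ∨ k = j := by intro k; omega
      rcases hcase with h | h
      · left
        obtain ⟨k, hk⟩ := Set.nonempty_iff_ne_empty.2 h
        rcases hall k with rfl | rfl
        · exact absurd hk hiα
        · exact hk
      · right
        intro hj
        apply h
        ext k
        rcases hall k with rfl | rfl
        · simpa using hi
        · simpa using hj
end

section
/- If there exists a secure equilibrium in a quantitative two-player reachability game G, then there exists a finite-memory secure equilibrium of the same type in G. -/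
namespace ReachGame

section Aux

variable {P V : Type} [DecidableEq P] (G : ReachGame P V)

theorem aux_lastV_append (h : List V) (w : V) : G.lastV (h ++ [w]) = w := by
  simp [lastV]

theorem aux_outHist_length (prof : P → List V → V) (n : ℕ) :
    (G.outHist prof n).length = n + 1 := by
  induction n with
  | zero => simp [outHist]
  | succ n ih => simp [outHist, ih]

theorem aux_isHistory_append {h : List V} (hh : G.IsHistory h) {w : V}
    (hw : G.E (G.lastV h) w) : G.IsHistory (h ++ [w]) := by
  obtain ⟨h1, h2, h3⟩ := hh
  refine ⟨by simp, ?_, ?_⟩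
  · cases h with
    | nil => exact absurd rfl h1
    | cons a t => simpa using h2
  · unfold List.Chain' at h3 ⊢
    rw [List.isChain_append]
    refine ⟨h3, by simp, ?_⟩
    intro x hx y hy
    simp only [List.head?_cons, Option.mem_def, Option.some.injEq] at hy
    subst hy
    have : G.lastV h = x := by
      simp only [Option.mem_def] at hx
      simp [lastV, List.getLastD_eq_getLast?, hx]
    rwa [← this]

theorem aux_outHist_isHistory {prof : P → List V → V} (hp : G.IsProfile prof) (n : ℕ) :
    G.IsHistory (G.outHist prof n) := by
  induction n with
  | zero => exact ⟨by simp [outHist], by simp [outHist], by simp [outHist, List.Chain']⟩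
  | succ n ih => exact G.aux_isHistory_append ih (hp _ _ ih rfl)

theorem aux_outcome_succ (prof : P → List V → V) (n : ℕ) :
    G.outcome prof (n + 1) = prof (G.owner (G.outcome prof n)) (G.outHist prof n) := by
  simp only [outcome, outHist, aux_lastV_append]

theorem aux_outHist_congr {p q : P → List V → V} (N : ℕ)
    (h : ∀ i l, l.length ≤ N → p i l = q i l) :
    ∀ n ≤ N, G.outHist p n = G.outHist q n := by
  intro n
  induction n with
  | zero => intro _; rfl
  | succ n ih =>
    intro hn
    have e := ih (by omega)
    simp only [outHist, e]
    rw [h _ _ (by rw [aux_outHist_length]; exact hn)]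

theorem aux_isProfile_update {p : P → List V → V} (hp : G.IsProfile p) {j : P}
    {s : List V → V} (hs : G.IsStrategy j s) : G.IsProfile (Function.update p j s) := by
  intro k
  by_cases hk : k = j
  · subst hk; simpa using hs
  · simpa [Function.update_of_ne hk] using hp k

/-- Vertices reachable when player `j` deviates arbitrarily from `prof`. -/
def auxReach (prof : P → List V → V) (j : P) : Set V :=
  {v | ∃ s, G.IsStrategy j s ∧ ∃ n, v = G.outcome (Function.update prof j s) n}

theorem auxReach_own {prof : P → List V → V} (hp : G.IsProfile prof) {j : P} {v w : V}
    (hv : v ∈ G.auxReach prof j) (ho : G.owner v = j) (hw : G.E v w) :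
    w ∈ G.auxReach prof j := by
  classical
  obtain ⟨s, hs, n, rfl⟩ := hv
  set H := G.outHist (Function.update prof j s) n with hH
  have hs' : G.IsStrategy j (Function.update s H w) := by
    intro h hh hhj
    by_cases e : h = H
    · rw [e, Function.update_self]; exact hw
    · rw [Function.update_of_ne e]; exact hs h hh hhj
  have key : G.outHist (Function.update prof j (Function.update s H w)) n = H := by
    refine G.aux_outHist_congr n ?_ n le_rfl
    intro i l hl
    have hne : l ≠ H := by
      intro e
      have := congrArg List.length e
      rw [hH, aux_outHist_length] at this
      omega
    by_cases hi : i = j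
    · subst hi; simp [Function.update_of_ne hne]
    · simp [Function.update_of_ne hi]
  refine ⟨_, hs', n + 1, ?_⟩
  rw [aux_outcome_succ]
  have ho' : G.owner (G.outcome (Function.update prof j (Function.update s H w)) n) = j := by
    unfold outcome; rw [key]; exact ho
  rw [ho', key]
  simp

theorem auxReach_other {prof : P → List V → V} (hp : G.IsProfile prof) {j : P} {v : V}
    (hv : v ∈ G.auxReach prof j) : ∃ w, G.E v w ∧ w ∈ G.auxReach prof j := by
  obtain ⟨s, hs, n, rfl⟩ := hv
  refine ⟨G.outcome (Function.update prof j s) (n + 1), ?_, s, hs, n + 1, rfl⟩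
  have hp' := G.aux_isProfile_update hp hs
  rw [aux_outcome_succ]
  exact hp' _ _ (G.aux_outHist_isHistory hp' n) rfl

open Classical in
/-- A positional choice staying in `X` whenever possible. -/
noncomputable def auxPos (X : Set V) (v : V) : V :=
  if h : ∃ w, G.E v w ∧ w ∈ X then h.choose else (G.total v).choose

theorem auxPos_E (X : Set V) (v : V) : G.E v (G.auxPos X v) := by
  unfold auxPos
  split_ifs with h
  · exact h.choose_spec.1
  · exact (G.total v).choose_spec

theorem auxPos_mem {X : Set V} {v : V} (h : ∃ w, G.E v w ∧ w ∈ X) : G.auxPos X v ∈ X := by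
  unfold auxPos
  rw [dif_pos h]
  exact h.choose_spec.2

theorem aux_finiteMemory [Finite V] (i : P) (s : List V → V) (N : ℕ) (f : V → V)
    (hs : ∀ h : List V, N < h.length → s h = f (G.lastV h)) : G.FiniteMemory i s := by
  classical
  have hfin : {l : List V | l.length ≤ N}.Finite := List.finite_length_le V N
  let rep : V → List V := fun v =>
    if h : ∃ l, G.IsHistory l ∧ N < l.length ∧ G.lastV l = v then h.choose else []
  have hfin2 : (Set.range rep).Finite := Set.finite_range rep
  refine ⟨hfin.toFinset ∪ hfin2.toFinset, ?_⟩
  intro h hh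
  by_cases hl : h.length ≤ N
  · refine ⟨h, ?_, hh, fun δ _ _ _ _ => rfl⟩
    simp [hl]
  · have hex : ∃ l, G.IsHistory l ∧ N < l.length ∧ G.lastV l = G.lastV h :=
      ⟨h, hh, by omega, rfl⟩
    have hrep : rep (G.lastV h) = hex.choose := dif_pos hex
    obtain ⟨h1, h2, h3⟩ := hex.choose_spec
    rw [← hrep] at h1 h2 h3
    refine ⟨rep (G.lastV h), by simp, h1, ?_⟩
    intro δ _ _ _ _
    rw [hs _ (by simp; omega), hs _ (by simp; omega)]
    congr 1
    rcases List.eq_nil_or_concat δ with rfl | ⟨δ', a, rfl⟩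
    · simp [h3]
    · simp only [List.concat_eq_append, ← List.append_assoc, aux_lastV_append]

theorem aux_cost_le_iff (i : P) (ρ : ℕ → V) (n : ℕ) :
    G.cost i ρ ≤ n ↔ ∃ l ≤ n, ρ l ∈ G.goal i := by
  constructor
  · intro h
    have hne : {n : ℕ∞ | ∃ l : ℕ, n = (l : ℕ∞) ∧ ρ l ∈ G.goal i}.Nonempty := by
      by_contra hc
      rw [Set.not_nonempty_iff_eq_empty] at hc
      unfold cost at h
      rw [hc, sInf_empty] at h
      simp at h
    obtain ⟨l, hl, hg⟩ := csInf_mem hne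
    unfold cost at h
    rw [hl] at h
    exact ⟨l, by exact_mod_cast h, hg⟩
  · rintro ⟨l, hl, hg⟩
    exact (sInf_le ⟨l, rfl, hg⟩ : G.cost i ρ ≤ l).trans (by exact_mod_cast hl)

theorem aux_cost_congr (i : P) {ρ π : ℕ → V} {N : ℕ} (h : ∀ n ≤ N, ρ n = π n)
    {n : ℕ} (hn : n ≤ N) : G.cost i ρ ≤ n ↔ G.cost i π ≤ n := by
  rw [aux_cost_le_iff, aux_cost_le_iff]
  constructor
  · rintro ⟨l, hl, hg⟩; exact ⟨l, hl, by rwa [← h l (hl.trans hn)]⟩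
  · rintro ⟨l, hl, hg⟩; exact ⟨l, hl, by rwa [h l (hl.trans hn)]⟩

theorem aux_cost_eq (i : P) {ρ π : ℕ → V} {N : ℕ} (h : ∀ n ≤ N, ρ n = π n)
    (hc : G.cost i ρ ≤ N) : G.cost i π = G.cost i ρ := by
  obtain ⟨c, hc'⟩ := ENat.ne_top_iff_exists.1 (ne_top_of_le_ne_top (ENat.coe_ne_top N) hc)
  have hcN : c ≤ N := by rw [← hc'] at hc; exact_mod_cast hc
  have h1 : G.cost i π ≤ c := (G.aux_cost_congr i h hcN).1 hc'.ge
  obtain ⟨d, hd'⟩ := ENat.ne_top_iff_exists.1 (ne_top_of_le_ne_top (ENat.coe_ne_top c) h1)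
  have hdc : d ≤ c := by rw [← hd'] at h1; exact_mod_cast h1
  have h2 : G.cost i ρ ≤ d := (G.aux_cost_congr i h (hdc.trans hcN)).2 hd'.ge
  apply le_antisymm
  · rw [← hc']; exact h1
  · rw [← hd']; exact h2

theorem aux_cost_ne_top (i : P) (ρ : ℕ → V) : G.cost i ρ ≠ ⊤ ↔ ∃ l, ρ l ∈ G.goal i := by
  constructor
  · intro h
    obtain ⟨c, hc⟩ := ENat.ne_top_iff_exists.1 h
    obtain ⟨l, _, hl⟩ := (G.aux_cost_le_iff i ρ c).1 hc.ge
    exact ⟨l, hl⟩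
  · rintro ⟨l, hl⟩
    exact ne_top_of_le_ne_top (ENat.coe_ne_top l) ((G.aux_cost_le_iff i ρ l).2 ⟨l, le_rfl, hl⟩)

end Aux

section Two

variable {V : Type} (G : ReachGame (Fin 2) V)

/-- No profitable deviation of player `j` (`i` being the opponent). -/
def AuxSec (prof : Fin 2 → List V → V) (i j : Fin 2) : Prop :=
  ∀ s, G.IsStrategy j s →
    ¬ (G.cost j (G.outcome (Function.update prof j s)) < G.cost j (G.outcome prof) ∨
      (G.cost j (G.outcome prof) = G.cost j (G.outcome (Function.update prof j s)) ∧
        G.cost i (G.outcome prof) < G.cost i (G.outcome (Function.update prof j s))))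

theorem aux_isSecure_iff (prof : Fin 2 → List V → V) :
    G.IsSecure prof ↔ G.AuxSec prof 1 0 ∧ G.AuxSec prof 0 1 := Iff.rfl

/-- The opponent. -/
def auxOpp (i : Fin 2) : Fin 2 := 1 - i

/-- The finite-memory profile. -/
noncomputable def auxTau (prof : Fin 2 → List V → V) (N : ℕ) (i : Fin 2) (h : List V) : V :=
  if h.length ≤ N then prof i h else G.auxPos (G.auxReach prof (auxOpp i)) (G.lastV h)

theorem auxTau_isProfile {prof : Fin 2 → List V → V} (hp : G.IsProfile prof) (N : ℕ) :
    G.IsProfile (G.auxTau prof N) := by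
  intro i h hh ho
  unfold auxTau
  split_ifs
  · exact hp i h hh ho
  · exact G.auxPos_E _ _

theorem auxTau_agree (prof : Fin 2 → List V → V) (N : ℕ) (j : Fin 2) (s : List V → V) :
    ∀ n ≤ N, G.outcome (Function.update (G.auxTau prof N) j s) n =
      G.outcome (Function.update prof j s) n := by
  intro n hn
  unfold outcome
  rw [G.aux_outHist_congr N ?_ n hn]
  intro i l hl
  by_cases hi : i = j
  · subst hi; simp
  · simp [Function.update_of_ne hi, auxTau, hl]

theorem auxTau_mem {prof : Fin 2 → List V → V} (hp : G.IsProfile prof) (N : ℕ) (j : Fin 2)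
    {s : List V → V} (hs : G.IsStrategy j s) (n : ℕ) :
    G.outcome (Function.update (G.auxTau prof N) j s) n ∈ G.auxReach prof j := by
  induction n with
  | zero => exact ⟨s, hs, 0, rfl⟩
  | succ k ih =>
    by_cases hk : k + 1 ≤ N
    · rw [G.auxTau_agree prof N j s _ hk]; exact ⟨s, hs, k + 1, rfl⟩
    · have hp' := G.aux_isProfile_update (G.auxTau_isProfile hp N) hs
      rw [aux_outcome_succ]
      by_cases ho : G.owner (G.outcome (Function.update (G.auxTau prof N) j s) k) = j
      · exact G.auxReach_own hp ih ho (hp' _ _ (G.aux_outHist_isHistory hp' k) rfl)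
      · rw [Function.update_of_ne ho]
        have hj : auxOpp (G.owner (G.outcome (Function.update (G.auxTau prof N) j s) k)) = j := by
          generalize G.owner (G.outcome (Function.update (G.auxTau prof N) j s) k) = a at ho
          unfold auxOpp
          omega
        unfold auxTau at hj ⊢
        rw [if_neg (by rw [aux_outHist_length]; exact hk), hj]
        exact G.auxPos_mem (G.auxReach_other hp ih)

theorem auxReach_goal {prof : Fin 2 → List V → V} {i j : Fin 2} (hsec : G.AuxSec prof i j)
    (hc : G.cost j (G.outcome prof) = ⊤) {v : V} (hv : v ∈ G.auxReach prof j) :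
    v ∉ G.goal j := by
  obtain ⟨s, hs, n, rfl⟩ := hv
  intro hg
  apply hsec s hs
  left
  rw [hc]
  exact lt_top_iff_ne_top.2 ((G.aux_cost_ne_top _ _).2 ⟨n, hg⟩)

theorem auxTau_top {prof : Fin 2 → List V → V} (hp : G.IsProfile prof) (N : ℕ) {i j : Fin 2}
    (hsec : G.AuxSec prof i j) (hc : G.cost j (G.outcome prof) = ⊤)
    {s : List V → V} (hs : G.IsStrategy j s) :
    G.cost j (G.outcome (Function.update (G.auxTau prof N) j s)) = ⊤ := by
  by_contra h
  obtain ⟨l, hl⟩ := (G.aux_cost_ne_top _ _).1 h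
  exact G.auxReach_goal hsec hc (G.auxTau_mem hp N j hs l) hl

theorem auxTau_cost {prof : Fin 2 → List V → V} (hp : G.IsProfile prof) (N : ℕ) {i j : Fin 2}
    (hsec : G.AuxSec prof i j)
    (hN : G.cost j (G.outcome prof) ≠ ⊤ → G.cost j (G.outcome prof) ≤ N) :
    G.cost j (G.outcome (G.auxTau prof N)) = G.cost j (G.outcome prof) := by
  by_cases hc : G.cost j (G.outcome prof) = ⊤
  · have := G.auxTau_top hp N hsec hc (G.auxTau_isProfile hp N j)
    rw [Function.update_eq_self] at this
    rw [this, hc]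
  · refine G.aux_cost_eq j ?_ (hN hc)
    intro n hn
    unfold outcome
    rw [G.aux_outHist_congr N ?_ n hn]
    intro i l hl
    simp [auxTau, hl]

theorem auxTau_sec {prof : Fin 2 → List V → V} (hp : G.IsProfile prof) (N : ℕ) {i j : Fin 2}
    (hsec : G.AuxSec prof i j) (hsec' : G.AuxSec prof j i)
    (hN : ∀ k, G.cost k (G.outcome prof) ≠ ⊤ → G.cost k (G.outcome prof) ≤ N) :
    G.AuxSec (G.auxTau prof N) i j := by
  intro s hs
  rw [G.auxTau_cost hp N hsec (hN j), G.auxTau_cost hp N hsec' (hN i)]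
  have hag := G.auxTau_agree prof N j s
  have hag' : ∀ n ≤ N, G.outcome (Function.update prof j s) n =
      G.outcome (Function.update (G.auxTau prof N) j s) n := fun n hn => (hag n hn).symm
  have h0 := hsec s hs
  rintro (hlt | ⟨heq, hlt⟩)
  · by_cases hc : G.cost j (G.outcome prof) = ⊤
    · rw [G.auxTau_top hp N hsec hc hs] at hlt
      exact not_top_lt hlt
    · apply h0
      left
      rw [G.aux_cost_eq j hag (hlt.le.trans (hN j hc))]
      exact hlt
  · apply h0
    right
    constructor
    · by_cases hc : G.cost j (G.outcome prof) = ⊤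
      · by_contra hne
        apply h0
        left
        rw [hc] at hne ⊢
        exact lt_top_iff_ne_top.2 (Ne.symm hne)
      · rw [G.aux_cost_eq j hag (heq ▸ hN j hc)]
        exact heq
    · by_contra hle
      rw [not_lt] at hle
      have hiN := hN i (ne_top_of_lt hlt)
      rw [G.aux_cost_eq i hag' (hle.trans hiN)] at hlt
      exact absurd hlt (not_lt.2 hle)

end Two

end ReachGame

/-- If a quantitative two-player reachability game `G` has a secure
equilibrium, then it has a finite-memory secure equilibrium of the same type. -/
theorem finiteMemory_secure_same_type {V : Type} [Fintype V]
    (G : ReachGame (Fin 2) V)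
    (prof : Fin 2 → List V → V) (hprof : G.IsProfile prof) (hsec : G.IsSecure prof) :
    ∃ τ : Fin 2 → List V → V,
      G.IsProfile τ ∧ G.FiniteMemoryProfile τ ∧ G.IsSecure τ ∧
      G.typeOf τ = G.typeOf prof := by
  rw [ReachGame.aux_isSecure_iff] at hsec
  obtain ⟨h10, h01⟩ := hsec
  obtain ⟨N, hN⟩ : ∃ N : ℕ, ∀ k, G.cost k (G.outcome prof) ≠ ⊤ →
      G.cost k (G.outcome prof) ≤ N := by
    refine ⟨max (G.cost 0 (G.outcome prof)).toNat (G.cost 1 (G.outcome prof)).toNat, ?_⟩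
    intro k hk
    rw [← ENat.coe_toNat hk]
    fin_cases k
    · exact_mod_cast le_max_left _ _
    · exact_mod_cast le_max_right _ _
  refine ⟨G.auxTau prof N, G.auxTau_isProfile hprof N, ?_, ?_, ?_⟩
  · intro i
    refine G.aux_finiteMemory i _ N (G.auxPos (G.auxReach prof (ReachGame.auxOpp i))) ?_
    intro h hh
    simp [ReachGame.auxTau, not_le.2 hh]
  · rw [ReachGame.aux_isSecure_iff]
    exact ⟨G.auxTau_sec hprof N h10 h01 hN, G.auxTau_sec hprof N h01 h10 hN⟩
  · have hk : ∀ k, G.cost k (G.outcome (G.auxTau prof N)) = G.cost k (G.outcome prof) := by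
      intro k
      fin_cases k
      · exact G.auxTau_cost hprof N h10 (hN 0)
      · exact G.auxTau_cost hprof N h01 (hN 1)
    ext k
    change (∃ l, _) ↔ (∃ l, _)
    rw [← G.aux_cost_ne_top, ← G.aux_cost_ne_top, hk]
end

section
/- Every quantitative multiplayer reachability/safety game has a finite-memory Nash equilibrium. -/
/-- A quantitative multiplayer reachability/safety game: the set of players is
partitioned into the players in `reach` (reachability objectives, `target i` being
the goal set `F_i`) and the remaining players (safety objectives, `target i` being
the bad set `B_i`).  The finite vertex set is partitioned among the players via
`owner`, `v0` is the initial vertex and every vertex has an outgoing `E`-edge. -/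
structure RSGame (P : Type) (V : Type) where
  reach : Set P
  owner : V → P
  v0 : V
  E : V → V → Prop
  total : ∀ v : V, ∃ w : V, E v w
  target : P → Set V

namespace RSGame

variable {P V : Type} [DecidableEq P] (G : RSGame P V)

/-- The last vertex of a history (with default `v0`). -/
def lastV (h : List V) : V := h.getLastD G.v0

/-- A history: a nonempty finite path in the graph starting at `v0`. -/
def IsHistory (h : List V) : Prop :=
  h ≠ [] ∧ h.head? = some G.v0 ∧ List.Chain' G.E h

/-- `σ` is a (total encoding of a) strategy of player `i`. -/
def IsStrategy (i : P) (σ : List V → V) : Prop :=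
  ∀ h : List V, G.IsHistory h → G.owner (G.lastV h) = i → G.E (G.lastV h) (σ h)

/-- A strategy profile: one strategy per player. -/
def IsProfile (prof : P → List V → V) : Prop :=
  ∀ i : P, G.IsStrategy i (prof i)

/-- The history of length `n` obtained by following the profile `prof` from `v0`. -/
def outHist (prof : P → List V → V) : ℕ → List V
  | 0 => [G.v0]
  | n + 1 => outHist prof n ++ [prof (G.owner (G.lastV (outHist prof n))) (outHist prof n)]

/-- The outcome play of the strategy profile `prof`. -/
def outcome (prof : P → List V → V) (n : ℕ) : V :=
  G.lastV (G.outHist prof n)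

open Classical in
/-- The cost of player `i` for the play `ρ`.  For a reachability player it is the
least `l` with `ρ l ∈ F_i` (and `+∞` if there is none); for a safety player it is
`-l` where `l` is the least index with `ρ l ∈ B_i` (and `-∞` if there is none). -/
noncomputable def cost (i : P) (ρ : ℕ → V) : EReal :=
  if i ∈ G.reach then
    sInf {x : EReal | ∃ l : ℕ, x = ((l : ℝ) : EReal) ∧ ρ l ∈ G.target i}
  else
    sSup {x : EReal | ∃ l : ℕ, x = -((l : ℝ) : EReal) ∧ ρ l ∈ G.target i}

/-- Nash equilibrium: no player can strictly decrease his cost by a unilateral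
deviation. -/
def IsNash (prof : P → List V → V) : Prop :=
  ∀ (j : P) (σ' : List V → V), G.IsStrategy j σ' →
    G.cost j (G.outcome prof) ≤ G.cost j (G.outcome (Function.update prof j σ'))

/-- `h ≈_σ h'` for the strategy `σ` of player `i`. -/
def MemEq (i : P) (σ : List V → V) (h h' : List V) : Prop :=
  ∀ δ : List V,
    G.IsHistory (h ++ δ) → G.owner (G.lastV (h ++ δ)) = i →
    G.IsHistory (h' ++ δ) → G.owner (G.lastV (h' ++ δ)) = i →
    σ (h ++ δ) = σ (h' ++ δ)

/-- A strategy of player `i` is finite-memory if `≈_σ` has finitely many classes on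
histories. -/
def FiniteMemory (i : P) (σ : List V → V) : Prop :=
  ∃ S : Finset (List V), ∀ h : List V, G.IsHistory h →
    ∃ h' ∈ S, G.IsHistory h' ∧ G.MemEq i σ h h'

/-- A profile is finite-memory if each of its strategies is. -/
def FiniteMemoryProfile (prof : P → List V → V) : Prop :=
  ∀ i : P, G.FiniteMemory i (prof i)

end RSGame

namespace RSGame

open Classical in
/-- Saddle-point rank of a (one attacker, one defender) reachability game. -/
theorem exists_rank {V : Type} [Finite V] (E : V → V → Prop) (total : ∀ v, ∃ w, E v w)
    (A T : Set V) : ∃ (r : V → ℕ∞) (s : V → V), (∀ v, E v (s v)) ∧ (∀ v ∈ T, r v = 0) ∧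
      (∀ v, v ∉ T → r v = r (s v) + 1) ∧
      (∀ v, v ∉ T → v ∈ A → ∀ w, E v w → r v ≤ r w + 1) ∧
      (∀ v, v ∉ T → v ∉ A → ∀ w, E v w → r w + 1 ≤ r v) := by
  let F : (V → ℕ∞) →o (V → ℕ∞) :=
    { toFun := fun r v => if v ∈ T then 0 else if v ∈ A then ⨅ w : {w // E v w}, (r w + 1)
        else ⨆ w : {w // E v w}, (r w + 1)
      monotone' := by
        intro r r' h v
        have h' : ∀ w, r w + 1 ≤ r' w + 1 := fun w => add_le_add_left (h w) 1
        dsimp only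
        split_ifs
        · exact le_rfl
        · exact iInf_mono fun w => h' w
        · exact iSup_mono fun w => h' w }
  obtain ⟨r, hr⟩ : ∃ r, F r = r := ⟨_, F.map_lfp⟩
  have hr' : ∀ v, r v = if v ∈ T then 0 else if v ∈ A then ⨅ w : {w // E v w}, (r w + 1)
        else ⨆ w : {w // E v w}, (r w + 1) := fun v => (congrFun hr v).symm
  have hs : ∀ v, ∃ w, E v w ∧ (v ∉ T → r v = r w + 1) := by
    intro v
    have : Nonempty {w // E v w} := let ⟨w, hw⟩ := total v; ⟨⟨w, hw⟩⟩
    by_cases hA : v ∈ A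
    · obtain ⟨w, hw⟩ := exists_eq_ciInf_of_finite (f := fun w : {w // E v w} => r w + 1)
      refine ⟨w, w.2, fun hT => ?_⟩
      rw [hr' v, if_neg hT, if_pos hA]; exact hw.symm
    · obtain ⟨w, hw⟩ := exists_eq_ciSup_of_finite (f := fun w : {w // E v w} => r w + 1)
      refine ⟨w, w.2, fun hT => ?_⟩
      rw [hr' v, if_neg hT, if_neg hA]; exact hw.symm
  choose s hs1 hs2 using hs
  refine ⟨r, s, hs1, fun v hv => by rw [hr' v, if_pos hv], hs2, ?_, ?_⟩
  · intro v hT hA w hw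
    rw [hr' v, if_neg hT, if_pos hA]
    exact iInf_le (fun w : {w // E v w} => r w + 1) ⟨w, hw⟩
  · intro v hT hA w hw
    rw [hr' v, if_neg hT, if_neg hA]
    exact le_iSup (fun w : {w // E v w} => r w + 1) ⟨w, hw⟩

theorem defend_bound {V : Type} (T : Set V) (r : V → ℕ∞) (h0 : ∀ v ∈ T, r v = 0)
    (ρ : ℕ → V) (k : ℕ) (h : ∀ n, k ≤ n → ρ n ∉ T → r (ρ n) ≤ r (ρ (n + 1)) + 1) (d : ℕ) :
    ρ (k + d) ∈ T → r (ρ k) ≤ d := by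
  induction d generalizing k with
  | zero => intro hT; simp [h0 (ρ k) hT]
  | succ d ih =>
    intro hT
    by_cases hk : ρ k ∈ T
    · simp [h0 _ hk]
    · have := ih (k + 1) (fun n hn => h n (by omega)) (by rwa [show k + 1 + d = k + (d + 1) by omega])
      refine (h k le_rfl hk).trans ?_
      push_cast
      exact add_le_add_left this 1

theorem attack_bound {V : Type} (T : Set V) (r : V → ℕ∞)
    (ρ : ℕ → V) (k : ℕ) (h : ∀ n, k ≤ n → ρ n ∉ T → r (ρ (n + 1)) + 1 ≤ r (ρ n)) (d : ℕ) :
    r (ρ k) ≤ d → ∃ l ≤ k + d, ρ l ∈ T := by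
  induction d generalizing k with
  | zero =>
    intro hd
    by_contra hc
    push Not at hc
    have := (h k le_rfl (hc k (by omega))).trans hd
    simp at this
  | succ d ih =>
    intro hd
    by_cases hk : ρ k ∈ T
    · exact ⟨k, by omega, hk⟩
    · have h1 := (h k le_rfl hk).trans hd
      push_cast at h1
      have h2 : r (ρ (k + 1)) ≤ d := (ENat.add_le_add_iff_right (by simp)).1 h1
      obtain ⟨l, hl, hl'⟩ := ih (k + 1) (fun n hn => h n (by omega)) h2
      exact ⟨l, by omega, hl'⟩

theorem attack_defend {V : Type} (T : Set V) (r : V → ℕ∞) (h0 : ∀ v ∈ T, r v = 0)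
    (ρ ρ' : ℕ → V) (k l : ℕ) (hkl : k ≤ l) (hk : ρ k = ρ' k)
    (ha : ∀ n, k ≤ n → ρ n ∉ T → r (ρ (n + 1)) + 1 ≤ r (ρ n))
    (hd : ∀ n, k ≤ n → ρ' n ∉ T → r (ρ' n) ≤ r (ρ' (n + 1)) + 1)
    (hl : ρ' l ∈ T) : ∃ l' ≤ l, ρ l' ∈ T := by
  have h1 := defend_bound T r h0 ρ' k hd (l - k) (by rwa [Nat.add_sub_cancel' hkl])
  rw [← hk] at h1
  obtain ⟨l', h, h'⟩ := attack_bound T r ρ k ha _ h1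
  exact ⟨l', by omega, h'⟩

variable {P V : Type} [DecidableEq P] (G : RSGame P V)

theorem cost_le_reach {j : P} (hj : j ∈ G.reach) (ρ ρ' : ℕ → V)
    (h : ∀ l, ρ' l ∈ G.target j → ∃ l' ≤ l, ρ l' ∈ G.target j) :
    G.cost j ρ ≤ G.cost j ρ' := by
  unfold cost
  rw [if_pos hj, if_pos hj]
  refine le_sInf ?_
  rintro x ⟨l, rfl, hl⟩
  obtain ⟨l', h1, h2⟩ := h l hl
  refine le_trans (sInf_le (a := ((l' : ℝ) : EReal)) ⟨l', rfl, h2⟩) ?_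
  exact_mod_cast h1

theorem cost_le_safe {j : P} (hj : j ∉ G.reach) (ρ ρ' : ℕ → V)
    (h : ∀ l, ρ l ∈ G.target j → ∃ l' ≤ l, ρ' l' ∈ G.target j) :
    G.cost j ρ ≤ G.cost j ρ' := by
  unfold cost
  rw [if_neg hj, if_neg hj]
  refine sSup_le ?_
  rintro x ⟨l, rfl, hl⟩
  obtain ⟨l', h1, h2⟩ := h l hl
  refine le_trans ?_ (le_sSup ⟨l', rfl, h2⟩)
  rw [EReal.neg_le_neg_iff]
  exact_mod_cast h1

open Classical in
/-- Memory update: current vertex and (once there is one) the first deviator. -/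
noncomputable def stp (s : P → V → V) (q : V × Option P) (v : V) : V × Option P :=
  (v, if v = s (q.2.getD (G.owner q.1)) q.1 then q.2 else some (q.2.getD (G.owner q.1)))

/-- Memory state after a history. -/
noncomputable def mem (s : P → V → V) (h : List V) : V × Option P :=
  h.tail.foldl (G.stp s) (G.v0, none)

/-- The common move function. -/
noncomputable def mv (s : P → V → V) (h : List V) : V :=
  s ((G.mem s h).2.getD (G.owner (G.mem s h).1)) (G.mem s h).1

theorem mem_append (s : P → V → V) (h δ : List V) (hh : h ≠ []) :
    G.mem s (h ++ δ) = δ.foldl (G.stp s) (G.mem s h) := by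
  unfold mem
  rw [List.tail_append_of_ne_nil hh, List.foldl_append]

theorem lastV_append (h : List V) (v : V) : G.lastV (h ++ [v]) = v := by
  simp [lastV]

theorem mem_fst (s : P → V → V) (h : List V) (hh : G.IsHistory h) :
    (G.mem s h).1 = G.lastV h := by
  obtain ⟨h1, h2, -⟩ := hh
  rcases List.eq_nil_or_concat h with rfl | ⟨l, v, rfl⟩
  · exact absurd rfl h1
  · by_cases hl : l = []
    · subst hl
      simp at h2
      simp [mem, lastV, h2]
    · rw [List.concat_eq_append, G.mem_append s l [v] hl, lastV_append]
      rfl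

theorem finMem (s : P → V → V) [Finite P] [Finite V] (i : P) : G.FiniteMemory i (G.mv s) := by
  classical
  have hfin : ((G.mem s) '' {h | G.IsHistory h}).Finite := Set.toFinite _
  obtain ⟨S, hS, hfS, hS'⟩ : ∃ S ⊆ {h | G.IsHistory h}, S.Finite ∧
      G.mem s '' S = G.mem s '' {h | G.IsHistory h} := by
    choose! g hg using fun x (hx : x ∈ G.mem s '' {h | G.IsHistory h}) => hx
    refine ⟨g '' (G.mem s '' {h | G.IsHistory h}), ?_, hfin.image g, ?_⟩
    · rintro _ ⟨x, hx, rfl⟩; exact (hg x hx).1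
    · ext x; constructor
      · rintro ⟨_, ⟨y, hy, rfl⟩, rfl⟩; rw [(hg y hy).2]; exact hy
      · intro hx; exact ⟨g x, ⟨x, hx, rfl⟩, (hg x hx).2⟩
  refine ⟨hfS.toFinset, fun h hh => ?_⟩
  have : G.mem s h ∈ G.mem s '' S := by rw [hS']; exact ⟨h, hh, rfl⟩
  obtain ⟨h', hh', e⟩ := this
  refine ⟨h', by simpa using hh', hS hh', ?_⟩
  intro δ _ _ _ _
  unfold mv
  rw [G.mem_append s h δ hh.1, G.mem_append s h' δ (hS hh').1, e]

theorem mv_isStrategy (s : P → V → V) (hs : ∀ j v, G.E v (s j v)) (i : P) :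
    G.IsStrategy i (G.mv s) := by
  intro h hh _
  unfold mv
  rw [G.mem_fst s h hh]
  exact hs _ _

theorem outHist_isHistory (prof : P → List V → V) (hp : G.IsProfile prof) (n : ℕ) :
    G.IsHistory (G.outHist prof n) := by
  induction n with
  | zero => exact ⟨by simp [outHist], by simp [outHist], List.isChain_singleton _⟩
  | succ n ih =>
    have hE := hp _ _ ih rfl
    obtain ⟨h1, h2, h3⟩ := ih
    refine ⟨by simp [outHist], by simp [outHist, List.head?_append, h2], ?_⟩
    rw [outHist]
    refine List.isChain_append.2 ⟨h3, by simp, ?_⟩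
    intro x hx y hy
    simp at hy
    subst hy
    have : G.lastV (G.outHist prof n) = x := by
      simp only [lastV, List.getLastD_eq_getLast?]
      rw [Option.mem_def.1 hx]; rfl
    rw [this] at hE ⊢
    exact hE

theorem outcome_succ (prof : P → List V → V) (n : ℕ) :
    G.outcome prof (n + 1) = prof (G.owner (G.outcome prof n)) (G.outHist prof n) := by
  simp [outcome, outHist, lastV_append]

theorem mem_outHist_succ (s : P → V → V) (prof : P → List V → V) (hp : G.IsProfile prof) (n : ℕ) :
    G.mem s (G.outHist prof (n + 1)) =
      G.stp s (G.mem s (G.outHist prof n)) (G.outcome prof (n + 1)) := by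
  rw [outcome_succ, outHist, G.mem_append s _ _ (G.outHist_isHistory prof hp n).1]
  rfl

theorem outcome_edge (prof : P → List V → V) (hp : G.IsProfile prof) (n : ℕ) :
    G.E (G.outcome prof n) (G.outcome prof (n + 1)) := by
  rw [outcome_succ]
  exact hp _ _ (G.outHist_isHistory prof hp n) rfl

theorem mem_main (s : P → V → V) (hs : ∀ j v, G.E v (s j v)) (n : ℕ) :
    (G.mem s (G.outHist (fun _ => G.mv s) n)).2 = none := by
  induction n with
  | zero => rfl
  | succ n ih =>
    rw [G.mem_outHist_succ s _ (fun i => G.mv_isStrategy s hs i), outcome_succ]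
    simp only [stp]
    rw [if_pos (by rfl)]
    exact ih

theorem outcome_main (s : P → V → V) (hs : ∀ j v, G.E v (s j v)) (n : ℕ) :
    G.outcome (fun _ => G.mv s) (n + 1) =
      s (G.owner (G.outcome (fun _ => G.mv s) n)) (G.outcome (fun _ => G.mv s) n) := by
  have h := G.outHist_isHistory (fun _ => G.mv s) (fun i => G.mv_isStrategy s hs i) n
  rw [outcome_succ]
  simp only [mv]
  rw [G.mem_main s hs n, G.mem_fst s _ h]
  rfl

/-- Structure of plays after a unilateral deviation. -/
theorem deviation (s : P → V → V) (hs : ∀ j v, G.E v (s j v)) (j : P) (σ' : List V → V)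
    (hσ : G.IsStrategy j σ') (l : ℕ) :
    let ρ := G.outcome (fun _ => G.mv s)
    let ρ' := G.outcome (Function.update (fun _ => G.mv s) j σ')
    (∀ n ≤ l, ρ' n = ρ n) ∨ ∃ k ≤ l, (∀ n ≤ k, ρ' n = ρ n) ∧
      ∀ n, k ≤ n → G.owner (ρ' n) ≠ j → ρ' (n + 1) = s j (ρ' n) := by
  intro ρ ρ'
  set prof' := Function.update (fun _ : P => G.mv s) j σ' with hprof
  have hp : G.IsProfile prof' := by
    intro i
    by_cases hi : i = j
    · subst hi; simpa [hprof] using hσ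
    · simpa [hprof, hi] using G.mv_isStrategy s hs i
  let q := fun n => G.mem s (G.outHist prof' n)
  have hq1 : ∀ n, (q n).1 = ρ' n := fun n => G.mem_fst s _ (G.outHist_isHistory _ hp n)
  have hqs : ∀ n, q (n + 1) = G.stp s (q n) (ρ' (n + 1)) := fun n => G.mem_outHist_succ s _ hp n
  have hfol : ∀ n, G.owner (ρ' n) ≠ j → ρ' (n + 1) = s ((q n).2.getD (G.owner (q n).1)) (q n).1 := by
    intro n hn
    change G.outcome prof' (n + 1) = _
    rw [outcome_succ]
    change prof' (G.owner (ρ' n)) _ = _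
    rw [hprof, Function.update_of_ne hn]
    rfl
  have hagree : ∀ n, (q n).2 = none → (∀ m ≤ n, ρ' m = ρ m) := by
    intro n
    induction n with
    | zero =>
      intro _ m hm
      obtain rfl : m = 0 := by omega
      rfl
    | succ n ih =>
      intro hn m hm
      rw [hqs] at hn
      simp only [stp] at hn
      split_ifs at hn with hc
      have ih := ih hn
      rcases Nat.lt_or_ge m (n + 1) with h | h
      · exact ih m (by omega)
      · obtain rfl : m = n + 1 := by omega
        rw [hc, hn, hq1, ih n le_rfl]
        exact (G.outcome_main s hs n).symm
  by_cases hl : (q l).2 = none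
  · exact Or.inl (hagree l hl)
  right
  classical
  have hex : ∃ n, (q n).2 ≠ none := ⟨l, hl⟩
  obtain ⟨k, hk⟩ : ∃ k, Nat.find hex = k + 1 := by
    apply Nat.exists_eq_succ_of_ne_zero
    intro h0
    have := Nat.find_spec hex
    rw [h0] at this
    exact this rfl
  have hkl : k + 1 ≤ l := hk ▸ Nat.find_min' hex hl
  have hk1 : (q (k + 1)).2 ≠ none := hk ▸ Nat.find_spec hex
  have hk0 : (q k).2 = none := by
    by_contra h
    exact Nat.find_min hex (by omega) h
  have hown : G.owner (ρ' k) = j := by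
    by_contra h
    apply hk1
    rw [hqs]
    simp only [stp]
    rw [if_pos (hfol k h)]
    exact hk0
  have hj : ∀ n, (q (k + 1 + n)).2 = some j := by
    intro n
    induction n with
    | zero =>
      rw [add_zero]
      rw [hqs] at hk1 ⊢
      simp only [stp] at hk1 ⊢
      split_ifs at hk1 ⊢ with hc
      · exact absurd hk0 hk1
      · rw [hk0, hq1]; simp [hown]
    | succ n ih =>
      rw [← add_assoc, hqs]
      simp only [stp]
      rw [ih]
      simp
  refine ⟨k, by omega, hagree k hk0, fun n hn hne => ?_⟩
  rcases Nat.lt_or_ge k n with h | h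
  · rw [hfol n hne, hq1]
    obtain ⟨d, rfl⟩ := Nat.exists_eq_add_of_le (show k + 1 ≤ n from h)
    rw [hj d]; rfl
  · obtain rfl : n = k := by omega
    exact absurd hown hne

end RSGame

/-- Every quantitative multiplayer reachability/safety game has a
finite-memory Nash equilibrium. -/
theorem exists_finiteMemory_nash_reach_safety {P V : Type} [Fintype P] [DecidableEq P]
    [Fintype V] (G : RSGame P V) :
    ∃ prof : P → List V → V,
      G.IsProfile prof ∧ G.FiniteMemoryProfile prof ∧ G.IsNash prof := by
  classical
  have hrank := fun j : P => RSGame.exists_rank G.E G.total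
    {v | G.owner v = j ↔ j ∈ G.reach} (G.target j)
  choose r s hs h0 heq hA hD using hrank
  have hp : G.IsProfile (fun _ => G.mv s) := fun i => G.mv_isStrategy s hs i
  refine ⟨fun _ => G.mv s, hp, fun i => G.finMem s i, ?_⟩
  intro j σ' hσ
  have hp' : G.IsProfile (Function.update (fun _ => G.mv s) j σ') := by
    intro i
    by_cases hi : i = j
    · subst hi; simpa using hσ
    · simpa [hi] using hp i
  have hdev := G.deviation s hs j σ' hσ
  have hm := G.outcome_main s hs
  have he := G.outcome_edge _ hp
  have he' := G.outcome_edge _ hp'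
  generalize G.outcome (fun _ => G.mv s) = ρ at *
  generalize G.outcome (Function.update (fun _ => G.mv s) j σ') = ρ' at *
  have hmj : ∀ n, G.owner (ρ n) = j → ρ (n + 1) = s j (ρ n) := by
    intro n hn
    rw [hm n, hn]
  by_cases hj : j ∈ G.reach
  · refine G.cost_le_reach hj _ _ fun l hl => ?_
    rcases hdev l with h | ⟨k, hk, h1, h2⟩
    · exact ⟨l, le_rfl, by rw [← h l le_rfl]; exact hl⟩
    · refine RSGame.attack_defend (G.target j) (r j) (h0 j) ρ ρ' k l hk (h1 k le_rfl).symm ?_ ?_ hl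
      · intro n _ hT
        by_cases hn : G.owner (ρ n) = j
        · rw [hmj n hn, ← heq j _ hT]
        · exact hD j _ hT (by simp [hn, hj]) _ (he n)
      · intro n hkn hT
        by_cases hn : G.owner (ρ' n) = j
        · exact hA j _ hT (by simp [hn, hj]) _ (he' n)
        · rw [h2 n hkn hn, ← heq j _ hT]
  · refine G.cost_le_safe hj _ _ fun l hl => ?_
    rcases hdev l with h | ⟨k, hk, h1, h2⟩
    · exact ⟨l, le_rfl, by rw [h l le_rfl]; exact hl⟩
    · refine RSGame.attack_defend (G.target j) (r j) (h0 j) ρ' ρ k l hk (h1 k le_rfl) ?_ ?_ hl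
      · intro n hkn hT
        by_cases hn : G.owner (ρ' n) = j
        · exact hD j _ hT (by simp [hn, hj]) _ (he' n)
        · rw [h2 n hkn hn, ← heq j _ hT]
      · intro n _ hT
        by_cases hn : G.owner (ρ n) = j
        · rw [hmj n hn, ← heq j _ hT]
        · exact hA j _ hT (by simp [hn, hj]) _ (he n)
end
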